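/- For a connected unbalanced signed graph G, the following are equivalent: (a) G admits a nowhere-zero integer flow; (b) the edges of G can be covered by signed circuits; (c) for each edge e, the graph G - e contains no balanced connected component. -/

import Mathlib

open Finset

/-- A signed multigraph on vertex type `V` with edge type `E`: each edge `e`
consists of two half-edges indexed by `Bool`; `ends e i` is the end-vertex at
which the half-edge `(e, i)` is attached (loops and multiple edges are
allowed), and `sign e ∈ {1, -1}` is the sign of the edge `e`. -/
structure SignedGraph (V E : Type) where
  ends : E → Bool → V
  sign : E → ℤˣ

namespace SignedGraph

variable {V E : Type} [Fintype V] [Fintype E] [DecidableEq V] [DecidableEq E]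

/-- The valency of `v` in the subgraph spanned by the edge set `S`:
the number of half-edges of edges of `S` attached at `v` (a loop at `v`
contributes `2`). -/
def valencyOn (G : SignedGraph V E) (S : Finset E) (v : V) : ℕ :=
  (univ.filter fun p : E × Bool => p.1 ∈ S ∧ G.ends p.1 p.2 = v).card

/-- The valency of a vertex in `G`. -/
def valency (G : SignedGraph V E) (v : V) : ℕ :=
  G.valencyOn univ v

/-- The set of vertices incident with some edge of `S`. -/
def suppV (G : SignedGraph V E) (S : Finset E) : Finset V :=
  univ.filter fun v => ∃ e ∈ S, ∃ i : Bool, G.ends e i = v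

/-- `u` and `v` are joined by an edge of `S`. -/
def AdjOn (G : SignedGraph V E) (S : Finset E) (u v : V) : Prop :=
  ∃ e ∈ S, ∃ i : Bool, G.ends e i = u ∧ G.ends e (!i) = v

/-- The subgraph spanned by the edge set `S` is connected: any two vertices
incident with edges of `S` are joined by a walk using edges of `S`. -/
def ConnOn (G : SignedGraph V E) (S : Finset E) : Prop :=
  ∀ u ∈ G.suppV S, ∀ v ∈ G.suppV S, Relation.ReflTransGen (G.AdjOn S) u v

/-- `G` is connected (as a graph on the whole vertex set `V`). -/
def Connected (G : SignedGraph V E) : Prop :=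
  Nonempty V ∧ ∀ u v : V, Relation.ReflTransGen (G.AdjOn univ) u v

/-- The edge set `S` spans a circuit: a nonempty connected `2`-regular
subgraph. -/
def IsCircuit (G : SignedGraph V E) (S : Finset E) : Prop :=
  S.Nonempty ∧ G.ConnOn S ∧ ∀ v ∈ G.suppV S, G.valencyOn S v = 2

/-- The sign of a set of edges: the product of the signs of its edges. -/
def signOf (G : SignedGraph V E) (S : Finset E) : ℤˣ :=
  ∏ e ∈ S, G.sign e

/-- The negative edges among `S`. -/
def negEdges (G : SignedGraph V E) (S : Finset E) : Finset E :=
  S.filter fun e => G.sign e = -1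

/-- A balanced circuit: a circuit of sign `+1`. -/
def IsBalancedCircuit (G : SignedGraph V E) (S : Finset E) : Prop :=
  G.IsCircuit S ∧ G.signOf S = 1

/-- An unbalanced circuit: a circuit of sign `-1`. -/
def IsUnbalancedCircuit (G : SignedGraph V E) (S : Finset E) : Prop :=
  G.IsCircuit S ∧ G.signOf S = -1

/-- `G` is balanced: it contains no unbalanced circuit. -/
def Balanced (G : SignedGraph V E) : Prop :=
  ∀ S : Finset E, G.IsCircuit S → G.signOf S = 1

/-- `G` is tightly unbalanced: it is unbalanced, but for some edge `f` the
graph `G - f` is balanced. -/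
def TightlyUnbalanced (G : SignedGraph V E) : Prop :=
  ¬ G.Balanced ∧ ∃ f : E, ∀ S : Finset E, G.IsCircuit S → f ∉ S → G.signOf S = 1

/-- `G` is eulerian: connected with all valencies even. -/
def Eulerian (G : SignedGraph V E) : Prop :=
  G.Connected ∧ ∀ v : V, Even (G.valency v)

/-- The edge set `S` spans an eulerian subgraph of `G`. -/
def EulerianOn (G : SignedGraph V E) (S : Finset E) : Prop :=
  S.Nonempty ∧ G.ConnOn S ∧ ∀ v : V, Even (G.valencyOn S v)

/-- An orientation (bidirection) of `G`: `dir e i = true` means that the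
half-edge `(e, i)` is directed towards its end-vertex, `dir e i = false` that
it is directed away from it.  Compatibility: a positive edge becomes an
ordinary directed edge (one half-edge in, one out) and a negative edge becomes
a broken (extroverted or introverted) edge. -/
structure Orientation (G : SignedGraph V E) where
  dir : E → Bool → Bool
  compat : ∀ e : E, G.sign e = 1 ↔ dir e false ≠ dir e true

/-- `φ` is a flow on `G` with respect to the orientation `O`: at every vertex
`v`, the sum of values on half-edges directed into `v` equals the sum of
values on half-edges directed out of `v` (Kirchhoff's law). -/
def IsFlow {A : Type} [AddCommGroup A] (G : SignedGraph V E)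
    (O : G.Orientation) (φ : E → A) : Prop :=
  ∀ v : V,
    ∑ p ∈ univ.filter (fun p : E × Bool => G.ends p.1 p.2 = v),
      (if O.dir p.1 p.2 then φ p.1 else -φ p.1) = 0

/-- `G` admits a nowhere-zero `A`-flow. -/
def HasNZFlow (G : SignedGraph V E) (A : Type) [AddCommGroup A] : Prop :=
  ∃ (O : G.Orientation) (φ : E → A), G.IsFlow O φ ∧ ∀ e : E, φ e ≠ 0

/-- `G` is flow-admissible: it admits a nowhere-zero integer flow. -/
def FlowAdmissible (G : SignedGraph V E) : Prop :=
  ∃ (O : G.Orientation) (φ : E → ℤ), G.IsFlow O φ ∧ ∀ e : E, φ e ≠ 0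

/-- `G` admits a nowhere-zero `k`-flow: an integer flow with all values in
`{±1, …, ±(k-1)}`. -/
def HasNZkFlow (G : SignedGraph V E) (k : ℕ) : Prop :=
  ∃ (O : G.Orientation) (φ : E → ℤ), G.IsFlow O φ ∧
    ∀ e : E, φ e ≠ 0 ∧ |φ e| < (k : ℤ)

/-- `G` is triply odd: it can be decomposed into three edge-disjoint eulerian
subgraphs, each with an odd number of negative edges, sharing a common
vertex. -/
def TriplyOdd (G : SignedGraph V E) : Prop :=
  ∃ S₁ S₂ S₃ : Finset E,
    Disjoint S₁ S₂ ∧ Disjoint S₁ S₃ ∧ Disjoint S₂ S₃ ∧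
    S₁ ∪ S₂ ∪ S₃ = univ ∧
    G.EulerianOn S₁ ∧ G.EulerianOn S₂ ∧ G.EulerianOn S₃ ∧
    Odd (G.negEdges S₁).card ∧ Odd (G.negEdges S₂).card ∧
    Odd (G.negEdges S₃).card ∧
    ∃ v : V, v ∈ G.suppV S₁ ∧ v ∈ G.suppV S₂ ∧ v ∈ G.suppV S₃

/-- The edge set `P` spans a (nontrivial) path from `u` to `v`: a connected
subgraph in which `u` and `v` have valency `1` and all other vertices have
valency `2`. -/
def IsPathOn (G : SignedGraph V E) (P : Finset E) (u v : V) : Prop :=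
  u ≠ v ∧ G.ConnOn P ∧ u ∈ G.suppV P ∧ v ∈ G.suppV P ∧
  G.valencyOn P u = 1 ∧ G.valencyOn P v = 1 ∧
  ∀ w ∈ G.suppV P, w ≠ u → w ≠ v → G.valencyOn P w = 2

/-- `T` spans a signed circuit of type (2): the union of two unbalanced
circuits meeting at a single vertex. -/
def IsType2 (G : SignedGraph V E) (T : Finset E) : Prop :=
  ∃ (S₁ S₂ : Finset E) (v : V),
    G.IsUnbalancedCircuit S₁ ∧ G.IsUnbalancedCircuit S₂ ∧ Disjoint S₁ S₂ ∧
    G.suppV S₁ ∩ G.suppV S₂ = {v} ∧ S₁ ∪ S₂ = T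

/-- `T` spans a signed circuit of type (3): the union of two vertex-disjoint
unbalanced circuits together with a path meeting the circuits only at its
ends. -/
def IsType3 (G : SignedGraph V E) (T : Finset E) : Prop :=
  ∃ (S₁ S₂ P : Finset E) (u v : V),
    G.IsUnbalancedCircuit S₁ ∧ G.IsUnbalancedCircuit S₂ ∧
    Disjoint (G.suppV S₁) (G.suppV S₂) ∧
    G.IsPathOn P u v ∧ u ∈ G.suppV S₁ ∧ v ∈ G.suppV S₂ ∧
    G.suppV P ∩ G.suppV S₁ = {u} ∧ G.suppV P ∩ G.suppV S₂ = {v} ∧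
    Disjoint P (S₁ ∪ S₂) ∧ S₁ ∪ S₂ ∪ P = T

/-- `T` spans a signed circuit: a balanced circuit, or a signed circuit of
type (2) or (3). -/
def IsSignedCircuit (G : SignedGraph V E) (T : Finset E) : Prop :=
  G.IsBalancedCircuit T ∨ G.IsType2 T ∨ G.IsType3 T

/-- `T` spans a weak unbalanced bicircuit: two edge-disjoint unbalanced
circuits (not necessarily vertex-disjoint) joined by a possibly trivial path
having no edge in the two circuits. -/
def IsWeakBicircuit (G : SignedGraph V E) (T : Finset E) : Prop :=
  ∃ C₁ C₂ : Finset E,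
    G.IsUnbalancedCircuit C₁ ∧ G.IsUnbalancedCircuit C₂ ∧ Disjoint C₁ C₂ ∧
    (((∃ v : V, v ∈ G.suppV C₁ ∧ v ∈ G.suppV C₂) ∧ T = C₁ ∪ C₂) ∨
      ∃ (P : Finset E) (u v : V),
        G.IsPathOn P u v ∧ u ∈ G.suppV C₁ ∧ v ∈ G.suppV C₂ ∧
        Disjoint P (C₁ ∪ C₂) ∧ T = C₁ ∪ C₂ ∪ P)

/-- Every connected component of `G - f` contains an unbalanced circuit,
i.e. `G - f` has no balanced component. -/
def NoBalancedComponentAvoiding (G : SignedGraph V E) (f : E) : Prop :=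
  ∀ u : V, ∃ S : Finset E,
    G.IsCircuit S ∧ G.signOf S = -1 ∧ f ∉ S ∧
    ∀ w ∈ G.suppV S, Relation.ReflTransGen (G.AdjOn (univ.erase f)) w u

/-- `G` is 2-edge-connected: connected, and still connected after removing
any single edge. -/
def TwoEdgeConnected (G : SignedGraph V E) : Prop :=
  G.Connected ∧ ∀ f : E, ∀ u v : V,
    Relation.ReflTransGen (G.AdjOn (univ.erase f)) u v

/-- `G` is antibalanced: replacing its signature `σ` by `-σ` makes it
balanced. -/
def Antibalanced (G : SignedGraph V E) : Prop :=
  ∀ S : Finset E, G.IsCircuit S → (∏ e ∈ S, (-G.sign e)) = 1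

end SignedGraph

/-!
All three conditions say that no edge is a coloop: no potential on the vertices has a (signed)
coboundary supported on a single edge. For nowhere-zero flows this is linear duality over `ℚ`,
followed by clearing denominators. A signed circuit through `e` forces a potential compatible with
all other edges to be compatible with `e`; so do unbalanced circuits in the components of `G - e`,
because a compatible potential vanishes on them.

Conversely, switch the signs so that a spanning subgraph `K` of `G - e` becomes positive. If a
component of `K` contained no negative edge, then the switching function, cut off outside that
component, would be a potential compatible with `G - e`. Comparing this potential with `e` produces
negative edges, hence unbalanced circuits, in the right components, and any two negative edges in
one component lie in a common signed circuit.
-/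

namespace SignedGraph

section Reach

variable {V E : Type} {G : SignedGraph V E} {S T : Finset E} {e : E} {u v : V}

/-- The relation of being joined by a walk (possibly trivial) along edges of `S`. -/
abbrev Reach (G : SignedGraph V E) (S : Finset E) : V → V → Prop :=
  Relation.ReflTransGen (G.AdjOn S)

theorem AdjOn.symm (h : G.AdjOn S u v) : G.AdjOn S v u := by
  obtain ⟨e, he, i, hu, hv⟩ := h
  exact ⟨e, he, !i, hv, by rwa [Bool.not_not]⟩

theorem Reach.symm (h : G.Reach S u v) : G.Reach S v u := by
  induction h with
  | refl => exact .refl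
  | tail _ hadj ih => exact .head hadj.symm ih

theorem reach_ends (he : e ∈ S) (i j : Bool) : G.Reach S (G.ends e i) (G.ends e j) := by
  obtain rfl | rfl := Bool.eq_or_eq_not j i
  · exact .refl
  · exact .single ⟨e, he, i, rfl, rfl⟩

theorem Reach.of_forall_edge (hS : ∀ g ∈ S, G.Reach T (G.ends g false) (G.ends g true))
    (h : G.Reach S u v) : G.Reach T u v := by
  refine Relation.reflTransGen_closed ?_ u v h
  rintro _ _ ⟨g, hg, i, rfl, rfl⟩
  cases i
  · exact hS g hg
  · exact (hS g hg).symm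

theorem Reach.mono (hST : S ⊆ T) (h : G.Reach S u v) : G.Reach T u v :=
  h.of_forall_edge fun _ hg => reach_ends (hST hg) _ _

theorem Reach.apply_eq {α : Type*} {r : V → α}
    (hr : ∀ g ∈ S, r (G.ends g false) = r (G.ends g true)) (h : G.Reach S u v) : r u = r v := by
  induction h with
  | refl => rfl
  | tail _ hadj ih =>
    obtain ⟨g, hg, i, rfl, rfl⟩ := hadj
    cases i
    · exact ih.trans (hr g hg)
    · exact ih.trans (hr g hg).symm

end Reach

section Support

variable {V E : Type} [Fintype V] [DecidableEq V] {G : SignedGraph V E} {S T : Finset E} {e : E}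
  {u v : V}

theorem mem_suppV : v ∈ G.suppV S ↔ ∃ e ∈ S, ∃ i, G.ends e i = v := by
  simp [suppV]

theorem ends_mem_suppV (he : e ∈ S) (i : Bool) : G.ends e i ∈ G.suppV S :=
  mem_suppV.2 ⟨e, he, i, rfl⟩

theorem Reach.mem_suppV (h : G.Reach S u v) (huv : u ≠ v) : v ∈ G.suppV S := by
  cases h with
  | refl => exact absurd rfl huv
  | tail _ hadj =>
    obtain ⟨g, hg, i, -, rfl⟩ := hadj
    exact ends_mem_suppV hg (!i)

theorem suppV_mono (hST : S ⊆ T) : G.suppV S ⊆ G.suppV T := by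
  intro v hv
  obtain ⟨e, he, i, rfl⟩ := mem_suppV.1 hv
  exact ends_mem_suppV (hST he) i

variable [DecidableEq E]

theorem ConnOn.reach_erase (hS : G.ConnOn S)
    (he : G.Reach (S.erase e) (G.ends e false) (G.ends e true))
    (hu : u ∈ G.suppV S) (hv : v ∈ G.suppV S) : G.Reach (S.erase e) u v := by
  refine Reach.of_forall_edge (fun g hg => ?_) (hS u hu v hv)
  obtain rfl | hge := eq_or_ne g e
  · exact he
  · exact reach_ends (mem_erase.2 ⟨hge, hg⟩) _ _

theorem ConnOn.union (hS : G.ConnOn S) (hT : G.ConnOn T) (hvS : v ∈ G.suppV S)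
    (hvT : v ∈ G.suppV T) : G.ConnOn (S ∪ T) := by
  have reach_v : ∀ w ∈ G.suppV (S ∪ T), G.Reach (S ∪ T) w v := by
    intro w hw
    obtain ⟨e, he, i, rfl⟩ := mem_suppV.1 hw
    obtain he | he := mem_union.1 he
    · exact Reach.mono subset_union_left (hS _ (ends_mem_suppV he i) _ hvS)
    · exact Reach.mono subset_union_right (hT _ (ends_mem_suppV he i) _ hvT)
  exact fun a ha b hb => (reach_v a ha).trans (reach_v b hb).symm

end Support

section Valency

variable {V E : Type} [Fintype E] [DecidableEq V] [DecidableEq E] {G : SignedGraph V E}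
  {S : Finset E} {e : E} {v : V}

theorem valencyOn_eq_sum (G : SignedGraph V E) (S : Finset E) (v : V) :
    G.valencyOn S v = ∑ g ∈ S, ∑ i, if G.ends g i = v then 1 else 0 := by
  have hfilter : (univ.filter fun p : E × Bool => p.1 ∈ S ∧ G.ends p.1 p.2 = v) =
      (S ×ˢ univ).filter fun p => G.ends p.1 p.2 = v := by
    ext p
    simp
  rw [valencyOn, hfilter, card_filter, sum_product]

theorem valencyOn_insert (he : e ∉ S) (i : Bool) (v : V) :
    G.valencyOn (insert e S) v = G.valencyOn S v +
      ((if G.ends e i = v then 1 else 0) + if G.ends e (!i) = v then 1 else 0) := by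
  rw [valencyOn_eq_sum, valencyOn_eq_sum, sum_insert he, add_comm, Fintype.sum_bool]
  cases i
  · rw [add_comm (ite (G.ends e true = v) _ _), Bool.not_false]
  · rw [Bool.not_true]

theorem mem_suppV_iff_valencyOn_ne_zero [Fintype V] : v ∈ G.suppV S ↔ G.valencyOn S v ≠ 0 := by
  simp [mem_suppV, valencyOn_eq_sum, or_iff_not_imp_left]

theorem prod_ends [Fintype V] {M : Type*} [CommMonoid M] (G : SignedGraph V E) (S : Finset E)
    (s : V → M) :
    ∏ g ∈ S, s (G.ends g false) * s (G.ends g true) = ∏ v, s v ^ G.valencyOn S v := by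
  calc ∏ g ∈ S, s (G.ends g false) * s (G.ends g true)
      = ∏ p ∈ S ×ˢ univ, s (G.ends p.1 p.2) := by
        simp only [prod_product, Fintype.prod_bool, mul_comm]
    _ = ∏ v, ∏ p ∈ S ×ˢ univ with G.ends p.1 p.2 = v, s v := (prod_fiberwise' _ _ _).symm
    _ = ∏ v, s v ^ G.valencyOn S v := by
        simp only [prod_const, valencyOn_eq_sum, card_filter, sum_product]

-- The handshake lemma applied to the set of vertices reachable from `G.ends e i`.
theorem reach_erase_of_even [Finite V] (he : e ∈ S) (i : Bool)
    (heven : ∀ v, G.Reach (S.erase e) (G.ends e i) v → Even (G.valencyOn S v)) :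
    G.Reach (S.erase e) (G.ends e i) (G.ends e (!i)) := by
  classical
  cases nonempty_fintype V
  let χ : V → ℤˣ := fun v => if G.Reach (S.erase e) (G.ends e i) v then -1 else 1
  have hprod : ∏ g ∈ S, χ (G.ends g false) * χ (G.ends g true) = 1 := by
    rw [prod_ends]
    refine prod_eq_one fun v _ => ?_
    by_cases hv : G.Reach (S.erase e) (G.ends e i) v
    · simp [χ, hv, (heven v hv).neg_one_pow]
    · simp [χ, hv]
  have hconst : ∀ g ∈ S, g ≠ e → χ (G.ends g false) * χ (G.ends g true) = 1 := by
    intro g hg hge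
    have hedge := reach_ends (G := G) (mem_erase.2 ⟨hge, hg⟩) false true
    have hiff : G.Reach (S.erase e) (G.ends e i) (G.ends g false) ↔
        G.Reach (S.erase e) (G.ends e i) (G.ends g true) :=
      ⟨fun h => h.trans hedge, fun h => h.trans hedge.symm⟩
    simp only [χ, hiff, Int.units_mul_self]
  rw [prod_eq_single_of_mem e he hconst] at hprod
  have hself : χ (G.ends e i) = -1 := if_pos .refl
  have hother : χ (G.ends e (!i)) = -1 := by
    cases i <;> simp_all [neg_eq_iff_eq_neg]
  by_contra hne
  simp [χ, hne] at hother

end Valency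

section Circuit

variable {V E : Type} [Fintype V] [Fintype E] [DecidableEq V] [DecidableEq E]
  {G : SignedGraph V E} {S T P : Finset E} {e : E} {u v w : V}

theorem IsCircuit.even_valencyOn (hS : G.IsCircuit S) (v : V) : Even (G.valencyOn S v) := by
  by_cases hv : v ∈ G.suppV S
  · rw [hS.2.2 v hv]
    exact even_two
  · rw [mem_suppV_iff_valencyOn_ne_zero, not_not] at hv
    rw [hv]
    exact Even.zero

theorem IsCircuit.reach_erase (hS : G.IsCircuit S) (he : e ∈ S)
    (hu : u ∈ G.suppV S) (hv : v ∈ G.suppV S) : G.Reach (S.erase e) u v :=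
  hS.2.1.reach_erase (reach_erase_of_even he false fun w _ => hS.even_valencyOn w) hu hv

theorem IsPathOn.reach_erase_left_or_right (hP : G.IsPathOn P u v) (he : e ∈ P) (i : Bool) :
    G.Reach (P.erase e) (G.ends e i) u ∨ G.Reach (P.erase e) (G.ends e i) v := by
  obtain ⟨-, hconn, hu, -, -, -, htwo⟩ := hP
  by_contra! ⟨hnu, hnv⟩
  have hother : G.Reach (P.erase e) (G.ends e i) (G.ends e (!i)) := by
    refine reach_erase_of_even he i fun w hw => ?_
    by_cases hwP : w ∈ G.suppV P
    · rw [htwo w hwP (fun h => hnu (h ▸ hw)) (fun h => hnv (h ▸ hw))]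
      exact even_two
    · rw [mem_suppV_iff_valencyOn_ne_zero, not_not] at hwP
      rw [hwP]
      exact Even.zero
  refine hnu (hconn.reach_erase ?_ (ends_mem_suppV he i) hu)
  cases i
  · exact hother
  · exact hother.symm

theorem IsSignedCircuit.connOn (hT : G.IsSignedCircuit T) : G.ConnOn T := by
  obtain hT | ⟨S₁, S₂, v, hS₁, hS₂, -, hv, rfl⟩ |
    ⟨S₁, S₂, P, u, v, hS₁, hS₂, -, ⟨-, hP, huP, hvP, -⟩, hu, hv, -, -, -, rfl⟩ := hT
  · exact hT.1.2.1
  · have hv : v ∈ G.suppV S₁ ∩ G.suppV S₂ := hv ▸ mem_singleton_self v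
    exact hS₁.1.2.1.union hS₂.1.2.1 (mem_inter.1 hv).1 (mem_inter.1 hv).2
  · rw [union_right_comm]
    exact (hS₁.1.2.1.union hP hu huP).union hS₂.1.2.1 (suppV_mono subset_union_right hvP) hv

end Circuit

section Potential

variable {V E : Type} {G : SignedGraph V E} {S T P : Finset E} {t : V → ℚ} {e g : E} {u v : V}

/-- The potential `t` is compatible with the edge `g`: its signed difference along `g`, i.e. the
value at `g` of the coboundary of `t`, vanishes. -/
def Compatible (G : SignedGraph V E) (t : V → ℚ) (g : E) : Prop :=
  t (G.ends g false) = ((G.sign g : ℤ) : ℚ) * t (G.ends g true)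

/-- No coboundary of a potential is supported on a single edge; in other words, the signed-graphic
matroid of `G` has no coloop. This is the pivot through which flows, signed circuits and balanced
components are compared. -/
def Coloopless (G : SignedGraph V E) : Prop :=
  ∀ (t : V → ℚ) (e : E), (∀ g, g ≠ e → G.Compatible t g) → G.Compatible t e

theorem Compatible.of_eq_zero (h : ∀ i, t (G.ends g i) = 0) : G.Compatible t g := by
  rw [Compatible, h, h, mul_zero]

theorem Compatible.abs_eq (h : G.Compatible t g) :
    |t (G.ends g false)| = |t (G.ends g true)| := by
  rw [h, abs_mul, ← Int.cast_abs, Int.isUnit_iff_abs_eq.1 (G.sign g).isUnit, Int.cast_one, one_mul]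

theorem Compatible.sign_mul_pos (h : G.Compatible t g) (hne : t (G.ends g true) ≠ 0) :
    0 < ((G.sign g : ℤ) : ℚ) * (t (G.ends g false) * t (G.ends g true)) := by
  have hsq : ((G.sign g : ℤ) : ℚ) * ((G.sign g : ℤ) : ℚ) = 1 := by
    rw [← Int.cast_mul, ← Units.val_mul, Int.units_mul_self, Units.val_one, Int.cast_one]
  rw [h, mul_assoc, ← mul_assoc, hsq, one_mul]
  exact mul_self_pos.2 hne

theorem Compatible.of_sign_mul_pos (habs : |t (G.ends g false)| = |t (G.ends g true)|)
    (hpos : 0 < ((G.sign g : ℤ) : ℚ) * (t (G.ends g false) * t (G.ends g true))) :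
    G.Compatible t g := by
  rw [Compatible]
  obtain hs | hs := Int.units_eq_one_or (G.sign g) <;> rw [hs] at hpos ⊢ <;>
    push_cast at hpos ⊢ <;> obtain h | h := abs_eq_abs.1 habs <;> rw [h] at hpos ⊢ <;>
    nlinarith [sq_nonneg (t (G.ends g true))]

theorem Reach.abs_eq_of_compatible (h : G.Reach S u v) (ht : ∀ g ∈ S, G.Compatible t g) :
    |t u| = |t v| :=
  h.apply_eq (r := fun w => |t w|) fun g hg => (ht g hg).abs_eq

theorem Reach.eq_zero_of_compatible (h : G.Reach S u v) (ht : ∀ g ∈ S, G.Compatible t g)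
    (hu : t u = 0) : t v = 0 := by
  rw [← abs_eq_zero, ← h.abs_eq_of_compatible ht, hu, abs_zero]

variable [Fintype V] [Fintype E] [DecidableEq V] [DecidableEq E]

theorem IsCircuit.signOf_mul_prod_pos (hS : G.IsCircuit S) (ht : ∀ v ∈ G.suppV S, t v ≠ 0) :
    0 < ((G.signOf S : ℤ) : ℚ) *
      ∏ g ∈ S, ((G.sign g : ℤ) : ℚ) * (t (G.ends g false) * t (G.ends g true)) := by
  have hsq : ((G.signOf S : ℤ) : ℚ) * ∏ g ∈ S, ((G.sign g : ℤ) : ℚ) = 1 := by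
    rw [← Int.cast_prod, ← Units.coe_prod, ← signOf, ← Int.cast_mul, ← Units.val_mul,
      Int.units_mul_self, Units.val_one, Int.cast_one]
  rw [prod_mul_distrib, ← mul_assoc, hsq, one_mul, prod_ends]
  refine prod_pos fun v _ => ?_
  by_cases hv : v ∈ G.suppV S
  · exact (hS.even_valencyOn v).pow_pos (ht v hv)
  · rw [mem_suppV_iff_valencyOn_ne_zero, not_not] at hv
    rw [hv, pow_zero]
    exact one_pos

theorem IsUnbalancedCircuit.eq_zero (hS : G.IsUnbalancedCircuit S)
    (ht : ∀ g ∈ S, G.Compatible t g) (hv : v ∈ G.suppV S) : t v = 0 := by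
  by_contra hne
  have hne' : ∀ w ∈ G.suppV S, t w ≠ 0 := fun w hw hw0 =>
    hne (Reach.eq_zero_of_compatible (hS.1.2.1 w hw v hv) ht hw0)
  have hpos := hS.1.signOf_mul_prod_pos hne'
  have hprod := prod_pos fun g hg => (ht g hg).sign_mul_pos (hne' _ (ends_mem_suppV hg true))
  rw [hS.2, Units.val_neg, Units.val_one, Int.cast_neg, Int.cast_one, neg_one_mul] at hpos
  linarith

theorem IsCircuit.compatible_of_eq_zero (hS : G.IsCircuit S) (he : e ∈ S)
    (ht : ∀ g ∈ S.erase e, G.Compatible t g) (hv : v ∈ G.suppV S) (hv0 : t v = 0) :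
    G.Compatible t e :=
  .of_eq_zero fun i =>
    (hS.reach_erase he hv (ends_mem_suppV he i)).eq_zero_of_compatible ht hv0

theorem IsPathOn.compatible_of_eq_zero (hP : G.IsPathOn P u v) (he : e ∈ P)
    (ht : ∀ g ∈ P.erase e, G.Compatible t g) (hu : t u = 0) (hv : t v = 0) :
    G.Compatible t e :=
  .of_eq_zero fun i => (hP.reach_erase_left_or_right he i).elim
    (fun h => Reach.eq_zero_of_compatible h.symm ht hu)
    (fun h => Reach.eq_zero_of_compatible h.symm ht hv)

theorem IsBalancedCircuit.compatible (hS : G.IsBalancedCircuit S) (he : e ∈ S)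
    (ht : ∀ g ∈ S.erase e, G.Compatible t g) : G.Compatible t e := by
  by_cases hzero : ∃ v ∈ G.suppV S, t v = 0
  · obtain ⟨v, hv, hv0⟩ := hzero
    exact hS.1.compatible_of_eq_zero he ht hv hv0
  push Not at hzero
  have hends := hS.1.reach_erase he (ends_mem_suppV he false) (ends_mem_suppV he true)
  refine .of_sign_mul_pos (hends.abs_eq_of_compatible ht) ?_
  have hpos := hS.1.signOf_mul_prod_pos hzero
  rw [hS.2, Units.val_one, Int.cast_one, one_mul, ← mul_prod_erase S _ he] at hpos
  refine pos_of_mul_pos_left hpos (prod_pos fun g hg => ?_).le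
  exact (ht g hg).sign_mul_pos (hzero _ (ends_mem_suppV (mem_of_mem_erase hg) true))

theorem IsType2.compatible (hT : G.IsType2 T) (he : e ∈ T)
    (ht : ∀ g, g ≠ e → G.Compatible t g) : G.Compatible t e := by
  obtain ⟨S₁, S₂, v, hS₁, hS₂, hdisj, hv, rfl⟩ := hT
  have ht' : ∀ S : Finset E, ∀ g ∈ S.erase e, G.Compatible t g := fun S g hg =>
    ht g (ne_of_mem_erase hg)
  obtain ⟨hv₁, hv₂⟩ := mem_inter.1 (hv ▸ mem_singleton_self v)
  obtain he | he := mem_union.1 he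
  · refine hS₁.1.compatible_of_eq_zero he (ht' S₁) hv₁ (hS₂.eq_zero ?_ hv₂)
    exact fun g hg => ht g fun h => disjoint_left.1 hdisj he (h ▸ hg)
  · refine hS₂.1.compatible_of_eq_zero he (ht' S₂) hv₂ (hS₁.eq_zero ?_ hv₁)
    exact fun g hg => ht g fun h => disjoint_right.1 hdisj he (h ▸ hg)

theorem IsType3.compatible (hT : G.IsType3 T) (he : e ∈ T)
    (ht : ∀ g, g ≠ e → G.Compatible t g) : G.Compatible t e := by
  obtain ⟨S₁, S₂, P, u, v, hS₁, hS₂, hsupp, hP, hu, hv, -, -, hdisj, rfl⟩ := hT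
  have ht' : ∀ S : Finset E, ∀ g ∈ S.erase e, G.Compatible t g := fun S g hg =>
    ht g (ne_of_mem_erase hg)
  have ht_of_notMem : ∀ S : Finset E, e ∉ S → ∀ g ∈ S, G.Compatible t g := fun S heS g hg =>
    ht g fun h => heS (h ▸ hg)
  have hdisj₁₂ : ∀ g ∈ S₁, g ∉ S₂ := fun g hg hg' =>
    disjoint_left.1 hsupp (ends_mem_suppV hg true) (ends_mem_suppV hg' true)
  obtain ⟨hP₁, hP₂⟩ := disjoint_union_right.1 hdisj
  have huv : G.Reach P u v := hP.2.1 u hP.2.2.1 v hP.2.2.2.1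
  have zero_of_notMem₁ (h : e ∉ S₁) : t u = 0 := hS₁.eq_zero (ht_of_notMem S₁ h) hu
  have zero_of_notMem₂ (h : e ∉ S₂) : t v = 0 := hS₂.eq_zero (ht_of_notMem S₂ h) hv
  rw [mem_union, mem_union] at he
  obtain (he | he) | he := he
  · refine hS₁.1.compatible_of_eq_zero he (ht' S₁) hu ?_
    exact Reach.eq_zero_of_compatible huv.symm (ht_of_notMem P (disjoint_right.1 hP₁ he))
      (zero_of_notMem₂ (hdisj₁₂ e he))
  · refine hS₂.1.compatible_of_eq_zero he (ht' S₂) hv ?_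
    exact huv.eq_zero_of_compatible (ht_of_notMem P (disjoint_right.1 hP₂ he))
      (zero_of_notMem₁ fun h => hdisj₁₂ e h he)
  · exact hP.compatible_of_eq_zero he (ht' P) (zero_of_notMem₁ (disjoint_left.1 hP₁ he))
      (zero_of_notMem₂ (disjoint_left.1 hP₂ he))

theorem coloopless_of_forall_mem_isSignedCircuit
    (h : ∀ e, ∃ T, G.IsSignedCircuit T ∧ e ∈ T) : G.Coloopless := by
  intro t e ht
  obtain ⟨T, hT | hT | hT, he⟩ := h e
  · exact hT.compatible he fun g hg => ht g (ne_of_mem_erase hg)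
  · exact hT.compatible he ht
  · exact hT.compatible he ht

theorem coloopless_of_forall_noBalancedComponentAvoiding
    (h : ∀ f, G.NoBalancedComponentAvoiding f) : G.Coloopless := by
  intro t e ht
  refine .of_eq_zero fun i => ?_
  obtain ⟨S, hS, hneg, heS, hreach⟩ := h e (G.ends e i)
  obtain ⟨g, hg⟩ := hS.1
  have hgS := ends_mem_suppV (G := G) hg true
  have hzero : t (G.ends g true) = 0 :=
    IsUnbalancedCircuit.eq_zero ⟨hS, hneg⟩ (fun g hg => ht g fun h => heS (h ▸ hg)) hgS
  exact Reach.eq_zero_of_compatible (hreach _ hgS) (fun g hg => ht g (ne_of_mem_erase hg)) hzero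

end Potential

section Flow

variable {V E : Type} {G : SignedGraph V E}

/-- The sign with which the half-edge `(e, i)` contributes to the net inflow at its end-vertex. -/
def Orientation.dirSign (O : G.Orientation) (e : E) (i : Bool) : ℚ :=
  if O.dir e i then 1 else -1

theorem Orientation.dirSign_ne_zero (O : G.Orientation) (e : E) (i : Bool) :
    O.dirSign e i ≠ 0 := by
  unfold dirSign
  split_ifs <;> norm_num

theorem Orientation.dirSign_true (O : G.Orientation) (e : E) :
    O.dirSign e true = -((G.sign e : ℤ) : ℚ) * O.dirSign e false := by
  have hcompat := O.compat e
  obtain hs | hs := Int.units_eq_one_or (G.sign e) <;> rw [hs] at hcompat ⊢ <;>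
    cases hf : O.dir e false <;> cases ht : O.dir e true <;> simp_all [dirSign]

instance (G : SignedGraph V E) : Nonempty G.Orientation :=
  ⟨{ dir e i := !i || decide (G.sign e ≠ 1)
     compat e := by simp }⟩

variable [Fintype E] [DecidableEq V] {O : G.Orientation}

/-- The net inflow at `v`, as a linear functional on rational edge weights; rational flows are the
common kernel of these functionals. -/
def Orientation.netInflow (O : G.Orientation) (v : V) : Module.Dual ℚ (E → ℚ) :=
  ∑ p : E × Bool with G.ends p.1 p.2 = v, O.dirSign p.1 p.2 • LinearMap.proj p.1

theorem isFlow_iff_netInflow_eq_zero {φ : E → ℤ} :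
    G.IsFlow O φ ↔ ∀ v, O.netInflow v (fun e => (φ e : ℚ)) = 0 := by
  refine forall_congr' fun v => ?_
  rw [← Int.cast_eq_zero (α := ℚ), Int.cast_sum, Orientation.netInflow, LinearMap.sum_apply]
  refine Eq.congr_left (sum_congr rfl fun p _ => ?_)
  simp only [Orientation.dirSign, LinearMap.smul_apply, LinearMap.proj_apply, smul_eq_mul]
  split_ifs <;> simp

-- Duality between the boundary map on edge weights and the coboundary map on potentials.
theorem Orientation.sum_mul_netInflow [Fintype V] (O : G.Orientation) (t : V → ℚ) (φ : E → ℚ) :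
    ∑ v, t v * O.netInflow v φ =
      ∑ g, O.dirSign g false * φ g *
        (t (G.ends g false) - ((G.sign g : ℤ) : ℚ) * t (G.ends g true)) := by
  calc ∑ v, t v * O.netInflow v φ
      = ∑ v, ∑ p : E × Bool with G.ends p.1 p.2 = v,
          t (G.ends p.1 p.2) * (O.dirSign p.1 p.2 * φ p.1) := by
        refine sum_congr rfl fun v _ => ?_
        rw [netInflow, LinearMap.sum_apply, mul_sum]
        refine sum_congr rfl fun p hp => ?_
        rw [(mem_filter.1 hp).2]
        rfl
    _ = ∑ g, ∑ i, t (G.ends g i) * (O.dirSign g i * φ g) := by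
        rw [sum_fiberwise, Fintype.sum_prod_type]
    _ = _ := by
        refine sum_congr rfl fun g _ => ?_
        rw [Fintype.sum_bool, O.dirSign_true]
        ring

variable [Finite V]

theorem FlowAdmissible.coloopless (h : G.FlowAdmissible) : G.Coloopless := by
  cases nonempty_fintype V
  obtain ⟨O, φ, hφ, hne⟩ := h
  intro t e ht
  have hpair := O.sum_mul_netInflow t fun g => (φ g : ℚ)
  simp only [isFlow_iff_netInflow_eq_zero.1 hφ, mul_zero, sum_const_zero] at hpair
  rw [Fintype.sum_eq_single e fun g hg => by rw [ht g hg, sub_self, mul_zero]] at hpair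
  have hcoeff : O.dirSign e false * φ e ≠ 0 :=
    mul_ne_zero (O.dirSign_ne_zero e false) (Int.cast_ne_zero.2 (hne e))
  exact sub_eq_zero.1 ((mul_eq_zero.1 hpair.symm).resolve_left hcoeff)

-- Otherwise evaluation at `e` is a combination of the net inflows, whose coefficients form a
-- potential with coboundary supported on `e`.
theorem Coloopless.exists_netInflow_eq_zero (hG : G.Coloopless) (O : G.Orientation) (e : E) :
    ∃ φ ∈ ⨅ v, (O.netInflow v).ker, φ e ≠ 0 := by
  classical
  cases nonempty_fintype V
  by_contra! hcon
  obtain ⟨t, ht⟩ := (Submodule.mem_span_range_iff_exists_fun ℚ).1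
    (mem_span_of_iInf_ker_le_ker (L := O.netInflow) (K := LinearMap.proj e) fun φ hφ => hcon φ hφ)
  have hcoboundary (g : E) : O.dirSign g false *
      (t (G.ends g false) - ((G.sign g : ℤ) : ℚ) * t (G.ends g true)) =
        (Pi.single g 1 : E → ℚ) e := by
    have hpair := O.sum_mul_netInflow t (Pi.single g 1)
    rw [Fintype.sum_eq_single g fun b hb => by rw [Pi.single_eq_of_ne hb, mul_zero, zero_mul],
      Pi.single_eq_same, mul_one] at hpair
    have heval := LinearMap.congr_fun ht (Pi.single g 1)
    rw [LinearMap.sum_apply] at heval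
    exact hpair.symm.trans heval
  have hte : G.Compatible t e := hG t e fun g hg => by
    have := hcoboundary g
    rw [Pi.single_eq_of_ne hg.symm] at this
    exact sub_eq_zero.1 ((mul_eq_zero.1 this).resolve_left (O.dirSign_ne_zero g false))
  have := hcoboundary e
  rw [hte, sub_self, mul_zero, Pi.single_eq_same] at this
  exact zero_ne_one this

theorem Coloopless.flowAdmissible (hG : G.Coloopless) : G.FlowAdmissible := by
  obtain ⟨O⟩ : Nonempty G.Orientation := inferInstance
  obtain ⟨φ, hφ, hne⟩ := Module.Dual.exists_forall_mem_ne_zero_of_forall_exists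
    (⨅ v, (O.netInflow v).ker) (fun e => LinearMap.proj e) (hG.exists_netInflow_eq_zero O)
  obtain ⟨b, hb⟩ := IsLocalization.exist_integer_multiples_of_finite (nonZeroDivisors ℤ) φ
  choose n hn using hb
  have hn' : (fun e => (n e : ℚ)) = (b : ℤ) • φ := funext hn
  refine ⟨O, n, isFlow_iff_netInflow_eq_zero.2 fun v => ?_, fun e he => ?_⟩
  · rw [hn', map_zsmul, LinearMap.mem_ker.1 ((Submodule.mem_iInf _).1 hφ v), smul_zero]
  · have := congrFun hn' e
    rw [he, Int.cast_zero, Pi.smul_apply, eq_comm, smul_eq_zero] at this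
    exact this.elim (nonZeroDivisors.coe_ne_zero b) (hne e)

theorem flowAdmissible_iff_coloopless : G.FlowAdmissible ↔ G.Coloopless :=
  ⟨FlowAdmissible.coloopless, Coloopless.flowAdmissible⟩

end Flow

section SimplePath

variable {V E : Type} [DecidableEq V] [DecidableEq E] {G : SignedGraph V E}
  {P Q Q₁ Q₂ J S : Finset E} {W W₁ W₂ X : Finset V} {e g : E} {u v w x y : V}

/-- `G.SimplePath P W u v` says that `P` and `W` are the edge set and the vertex set of a path from
`u` to `v` without repeated vertices. Unlike in `IsPathOn`, the path may be trivial. -/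
inductive SimplePath (G : SignedGraph V E) : Finset E → Finset V → V → V → Prop
  | nil (v : V) : SimplePath G ∅ {v} v v
  | cons {P : Finset E} {W : Finset V} {v : V} (e : E) (i : Bool) :
      SimplePath G P W (G.ends e (!i)) v → G.ends e i ∉ W →
      SimplePath G (insert e P) (insert (G.ends e i) W) (G.ends e i) v

namespace SimplePath

theorem left_mem (h : G.SimplePath P W u v) : u ∈ W := by
  cases h <;> simp

theorem right_mem (h : G.SimplePath P W u v) : v ∈ W := by
  induction h <;> simp_all

theorem ends_mem (h : G.SimplePath P W u v) (hg : g ∈ P) (j : Bool) : G.ends g j ∈ W := by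
  induction h with
  | nil => simp at hg
  | cons e i h _ ih =>
    obtain rfl | hg := mem_insert.1 hg
    · obtain rfl | rfl := Bool.eq_or_eq_not j i
      · exact mem_insert_self _ _
      · exact mem_insert_of_mem h.left_mem
    · exact mem_insert_of_mem (ih hg)

theorem ends_ne (h : G.SimplePath P W u v) (hg : g ∈ P) : G.ends g false ≠ G.ends g true := by
  induction h with
  | nil => simp at hg
  | cons e i h hW ih =>
    obtain rfl | hg := mem_insert.1 hg
    · have hne : G.ends g i ≠ G.ends g (!i) := fun heq => hW (heq ▸ h.left_mem)
      cases i
      · exact hne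
      · exact hne.symm
    · exact ih hg

theorem disjoint_of_ends_mem (h : G.SimplePath P W u v) (hS : ∀ g ∈ S, ∀ i, G.ends g i ∈ X)
    (hWX : ∀ z ∈ W, z ∈ X → z = x) : Disjoint P S :=
  disjoint_left.2 fun g hgP hgS => h.ends_ne hgP <|
    (hWX _ (h.ends_mem hgP false) (hS g hgS false)).trans
      (hWX _ (h.ends_mem hgP true) (hS g hgS true)).symm

theorem reach (h : G.SimplePath P W u v) (hw : w ∈ W) : G.Reach P u w := by
  induction h with
  | nil v => rw [mem_singleton.1 hw]
  | cons e i _ _ ih =>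
    obtain rfl | hw := mem_insert.1 hw
    · exact .refl
    · exact (reach_ends (mem_insert_self _ _) i (!i)).trans ((ih hw).mono (subset_insert _ _))

theorem append (hP : G.SimplePath P W u v) (hQ : G.SimplePath Q X v w)
    (hWX : ∀ z ∈ W, z ∈ X → z = v) : G.SimplePath (P ∪ Q) (W ∪ X) u w := by
  induction hP with
  | nil v => rwa [empty_union, singleton_union, insert_eq_self.2 hQ.left_mem]
  | cons e i h hW ih =>
    rw [insert_union, insert_union]
    refine cons e i (ih hQ fun z hz => hWX z (mem_insert_of_mem hz)) ?_
    rw [mem_union, not_or]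
    exact ⟨hW, fun hX => hW (hWX _ (mem_insert_self _ _) hX ▸ h.right_mem)⟩

theorem reverse (h : G.SimplePath P W u v) : G.SimplePath P W v u := by
  induction h with
  | nil v => exact nil v
  | cons e i h hW ih =>
    have hedge : G.SimplePath {e} {G.ends e (!i), G.ends e i} (G.ends e (!i)) (G.ends e i) := by
      have hnil : G.SimplePath ∅ {G.ends e i} (G.ends e (!!i)) (G.ends e i) := by
        rw [Bool.not_not]
        exact nil _
      exact hnil.cons e (!i) fun heq => hW (mem_singleton.1 heq ▸ h.left_mem)
    have happend := ih.append hedge fun z hz hz' => by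
      obtain rfl | hz' := mem_insert.1 hz'
      · rfl
      · exact absurd (mem_singleton.1 hz' ▸ hz) hW
    rwa [union_insert, insert_eq_self.2 (mem_union_left _ h.left_mem), union_singleton,
      union_singleton] at happend

theorem exists_split_at_first_mem (h : G.SimplePath P W u v) (hX : ∃ x ∈ W, x ∈ X) :
    ∃ x ∈ X, ∃ P₁ P₂ W₁ W₂, G.SimplePath P₁ W₁ u x ∧ G.SimplePath P₂ W₂ x v ∧
      P₁ ∪ P₂ = P ∧ W₁ ∪ W₂ = W ∧ (∀ z ∈ W₁, z ∈ W₂ → z = x) ∧ ∀ z ∈ W₁, z ∈ X → z = x := by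
  induction h with
  | nil v =>
    obtain ⟨x, hx, hxX⟩ := hX
    rw [mem_singleton.1 hx] at hxX
    exact ⟨v, hxX, ∅, ∅, {v}, {v}, nil v, nil v, by simp⟩
  | @cons P W v e i h hW ih =>
    by_cases hu : G.ends e i ∈ X
    · exact ⟨_, hu, ∅, insert e P, {G.ends e i}, insert (G.ends e i) W, nil _, cons e i h hW,
        by simp⟩
    obtain ⟨y, hy, hyX⟩ := hX
    have hyW : y ∈ W := mem_of_mem_insert_of_ne hy fun heq => hu (heq ▸ hyX)
    obtain ⟨x, hx, P₁, P₂, W₁, W₂, h₁, h₂, rfl, rfl, hmeet, hfirst⟩ := ih ⟨y, hyW, hyX⟩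
    rw [mem_union, not_or] at hW
    refine ⟨x, hx, insert e P₁, P₂, insert (G.ends e i) W₁, W₂, cons e i h₁ hW.1, h₂,
      insert_union _ _ _, insert_union _ _ _, ?_, ?_⟩ <;> rw [forall_mem_insert]
    · exact ⟨fun h => absurd h hW.2, hmeet⟩
    · exact ⟨fun h => absurd h hu, hfirst⟩

theorem exists_split (h : G.SimplePath P W u v) (hx : x ∈ W) :
    ∃ P₁ P₂ W₁ W₂, G.SimplePath P₁ W₁ u x ∧ G.SimplePath P₂ W₂ x v ∧
      P₁ ∪ P₂ = P ∧ W₁ ∪ W₂ = W ∧ ∀ z ∈ W₁, z ∈ W₂ → z = x := by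
  obtain ⟨y, hy, P₁, P₂, W₁, W₂, h₁, h₂, hP, hW, hmeet, -⟩ :=
    h.exists_split_at_first_mem ⟨x, hx, mem_singleton_self x⟩
  rw [mem_singleton] at hy
  subst hy
  exact ⟨P₁, P₂, W₁, W₂, h₁, h₂, hP, hW, hmeet⟩

theorem exists_detour_of_mem_right (hQ₁ : G.SimplePath Q₁ W₁ u x) (hQ₂ : G.SimplePath Q₂ W₂ x v)
    (hmeet : ∀ z ∈ W₁, z ∈ W₂ → z = x) (hJ : G.SimplePath J X x y) (hy : y ∈ W₂)
    (hXW : ∀ z ∈ X, z ∈ W₁ ∪ W₂ → z = x ∨ z = y) :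
    ∃ R Y, G.SimplePath R Y u v ∧ J ⊆ R ∧ R ⊆ Q₁ ∪ Q₂ ∪ J := by
  obtain ⟨M, N, W₃, W₄, hM, hN, rfl, rfl, hmeet'⟩ := hQ₂.exists_split hy
  have eq_of_eq {z : V} (hz : z = x ∨ z = y) (hz₄ : z ∈ W₄) : z = y :=
    hz.elim (fun heq => hmeet' z (heq ▸ hM.left_mem) hz₄) id
  have hQJ := hQ₁.append hJ fun z hz hzX =>
    (hXW z hzX (mem_union_left _ hz)).elim id fun heq => hmeet z hz (heq ▸ hy)
  refine ⟨_, _, hQJ.append hN fun z hz hz₄ => ?_, ?_, ?_⟩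
  · obtain hz | hz := mem_union.1 hz
    · exact eq_of_eq (.inl (hmeet z hz (mem_union_right _ hz₄))) hz₄
    · exact eq_of_eq (hXW z hz (mem_union_right _ (mem_union_right _ hz₄))) hz₄
  · exact subset_union_right.trans subset_union_left
  · intro g
    simp only [mem_union]
    tauto

theorem exists_detour (hQ : G.SimplePath Q W u v) (hJ : G.SimplePath J X x y) (hx : x ∈ W)
    (hy : y ∈ W) (hXW : ∀ z ∈ X, z ∈ W → z = x ∨ z = y) :
    ∃ R Y, G.SimplePath R Y u v ∧ J ⊆ R ∧ R ⊆ Q ∪ J := by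
  obtain ⟨Q₁, Q₂, W₁, W₂, hQ₁, hQ₂, rfl, rfl, hmeet⟩ := hQ.exists_split hx
  obtain hy | hy := mem_union.1 hy
  · rw [union_comm W₁] at hXW
    rw [union_comm Q₁]
    obtain ⟨R, Y, hR, hJR⟩ := exists_detour_of_mem_right hQ₂.reverse hQ₁.reverse
      (fun z h₂ h₁ => hmeet z h₁ h₂) hJ hy hXW
    exact ⟨R, Y, hR.reverse, hJR⟩
  · exact exists_detour_of_mem_right hQ₁ hQ₂ hmeet hJ hy hXW

variable [Fintype V]

theorem suppV_eq (h : G.SimplePath P W u v) (huv : u ≠ v) : G.suppV P = W := by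
  refine Subset.antisymm (fun w hw => ?_) fun w hw => ?_
  · obtain ⟨g, hg, i, rfl⟩ := mem_suppV.1 hw
    exact h.ends_mem hg i
  · obtain rfl | hne := eq_or_ne u w
    · exact (h.reach h.right_mem).symm.mem_suppV huv.symm
    · exact (h.reach hw).mem_suppV hne

theorem suppV_insert (h : G.SimplePath P W (G.ends e false) (G.ends e true)) :
    G.suppV (insert e P) = W := by
  refine Subset.antisymm (fun w hw => ?_) fun w hw => ?_
  · obtain ⟨g, hg, i, rfl⟩ := mem_suppV.1 hw
    obtain rfl | hg := mem_insert.1 hg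
    · cases i
      · exact h.left_mem
      · exact h.right_mem
    · exact h.ends_mem hg i
  · obtain rfl | hne := eq_or_ne (G.ends e false) w
    · exact ends_mem_suppV (mem_insert_self _ _) false
    · exact suppV_mono (subset_insert _ _) ((h.reach hw).mem_suppV hne)

end SimplePath

theorem Reach.exists_simplePath (h : G.Reach S u v) : ∃ P W, P ⊆ S ∧ G.SimplePath P W u v := by
  induction h using Relation.ReflTransGen.head_induction_on with
  | refl => exact ⟨∅, {v}, empty_subset _, .nil v⟩
  | head hadj _ ih =>
    obtain ⟨e, he, i, rfl, rfl⟩ := hadj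
    obtain ⟨P, W, hPS, hP⟩ := ih
    by_cases hu : G.ends e i ∈ W
    · obtain ⟨_, P₂, _, W₂, _, hP₂, rfl, _⟩ := hP.exists_split hu
      exact ⟨P₂, W₂, subset_union_right.trans hPS, hP₂⟩
    · exact ⟨_, _, insert_subset he hPS, hP.cons e i hu⟩

theorem Reach.exists_simplePath_to_first_mem (h : G.Reach S u v) (hv : v ∈ X) :
    ∃ P W, P ⊆ S ∧ ∃ x ∈ X, G.SimplePath P W u x ∧ ∀ z ∈ W, z ∈ X → z = x := by
  obtain ⟨P, W, hPS, hP⟩ := h.exists_simplePath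
  obtain ⟨x, hx, P₁, _, W₁, _, hP₁, _, rfl, _, _, hfirst⟩ :=
    hP.exists_split_at_first_mem ⟨v, hP.right_mem, hv⟩
  exact ⟨P₁, W₁, subset_union_left.trans hPS, x, hx, hP₁, hfirst⟩

end SimplePath

section PathCircuit

variable {V E : Type} [Fintype E] [DecidableEq V] [DecidableEq E] {G : SignedGraph V E}
  {P C D Z : Finset E} {W Y : Finset V} {e : E} {u v : V}

namespace SimplePath

theorem valencyOn_add (h : G.SimplePath P W u v) (w : V) :
    G.valencyOn P w + ((if u = w then 1 else 0) + if v = w then 1 else 0) =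
      if w ∈ W then 2 else 0 := by
  induction h with
  | nil v =>
    obtain rfl | hne := eq_or_ne v w
    · simp [valencyOn_eq_sum]
    · simp [valencyOn_eq_sum, hne, hne.symm]
  | cons e i h hW ih =>
    rw [valencyOn_insert (fun he => hW (h.ends_mem he i)) i]
    obtain rfl | hne := eq_or_ne (G.ends e i) w
    · rw [if_neg hW] at ih
      simp only [mem_insert_self, if_true]
      omega
    · simp only [mem_insert, hne.symm, hne, false_or, if_false]
      omega

theorem valencyOn_insert (h : G.SimplePath P W (G.ends e false) (G.ends e true)) (he : e ∉ P)
    (w : V) : G.valencyOn (insert e P) w = if w ∈ W then 2 else 0 := by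
  rw [SignedGraph.valencyOn_insert he false, Bool.not_false, h.valencyOn_add]

variable [Fintype V]

theorem isCircuit_insert (h : G.SimplePath P W (G.ends e false) (G.ends e true)) (he : e ∉ P) :
    G.IsCircuit (insert e P) := by
  rw [IsCircuit, ConnOn, h.suppV_insert]
  refine ⟨insert_nonempty _ _, fun a ha b hb => ?_, fun w hw => ?_⟩
  · exact Reach.mono (subset_insert _ _) ((h.reach ha).symm.trans (h.reach hb))
  · rw [h.valencyOn_insert he, if_pos hw]

theorem isPathOn (h : G.SimplePath P W u v) (huv : u ≠ v) : G.IsPathOn P u v := by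
  rw [IsPathOn, ConnOn, h.suppV_eq huv]
  refine ⟨huv, fun a ha b hb => ?_, h.left_mem, h.right_mem, ?_, ?_, fun w hw hwu hwv => ?_⟩
  · exact (h.reach ha).symm.trans (h.reach hb)
  · simpa [huv.symm, h.left_mem] using h.valencyOn_add u
  · simpa [huv, h.right_mem] using h.valencyOn_add v
  · simpa [hwu.symm, hwv.symm, hw] using h.valencyOn_add w

theorem isSignedCircuit_union (hZ : G.SimplePath Z Y u v) (hC : G.IsUnbalancedCircuit C)
    (hD : G.IsUnbalancedCircuit D) (hCD : Disjoint C D) (hu : Y ∩ G.suppV C = {u})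
    (hv : Y ∩ G.suppV D = {v}) (hmeet : G.suppV C ∩ G.suppV D ⊆ Y) :
    G.IsSignedCircuit (C ∪ D ∪ Z) := by
  have hCuv : ∀ z ∈ G.suppV C, z ∈ G.suppV D → z = u ∧ z = v := fun z hzC hzD => by
    have hzY := hmeet (mem_inter.2 ⟨hzC, hzD⟩)
    exact ⟨mem_singleton.1 (hu ▸ mem_inter.2 ⟨hzY, hzC⟩),
      mem_singleton.1 (hv ▸ mem_inter.2 ⟨hzY, hzD⟩)⟩
  have huC : u ∈ G.suppV C := (mem_inter.1 (hu ▸ mem_singleton_self u)).2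
  have hvD : v ∈ G.suppV D := (mem_inter.1 (hv ▸ mem_singleton_self v)).2
  obtain rfl | huv := eq_or_ne u v
  · have hZ0 : Z = ∅ := by
      cases hZ with
      | nil => rfl
      | cons e i h hW => exact absurd h.right_mem hW
    refine .inr (.inl ⟨C, D, u, hC, hD, hCD, ?_, by rw [hZ0, union_empty]⟩)
    exact eq_singleton_iff_unique_mem.2 ⟨mem_inter.2 ⟨huC, hvD⟩, fun z hz =>
      (hCuv z (mem_inter.1 hz).1 (mem_inter.1 hz).2).1⟩
  · have hdisj {S : Finset E} {x : V} (hS : Y ∩ G.suppV S = {x}) : Disjoint Z S :=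
      hZ.disjoint_of_ends_mem (fun g hg => ends_mem_suppV hg) fun z hz hzS =>
        mem_singleton.1 (hS ▸ mem_inter.2 ⟨hz, hzS⟩)
    refine .inr (.inr ⟨C, D, Z, u, v, hC, hD, ?_, hZ.isPathOn huv, huC, hvD, ?_, ?_,
      disjoint_union_right.2 ⟨hdisj hu, hdisj hv⟩, rfl⟩)
    · exact disjoint_left.2 fun z hzC hzD =>
        huv ((hCuv z hzC hzD).1.symm.trans (hCuv z hzC hzD).2)
    · rwa [hZ.suppV_eq huv]
    · rwa [hZ.suppV_eq huv]

end SimplePath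

end PathCircuit

section Switching

variable {V E : Type} {G : SignedGraph V E} {s : V → ℤˣ} {t : V → ℚ} {K S : Finset E} {e g : E}
  {u v : V}

/-- The sign of the edge `g` after switching at the vertices `v` with `s v = -1`. -/
def switchedSign (G : SignedGraph V E) (s : V → ℤˣ) (g : E) : ℤˣ :=
  G.sign g * (s (G.ends g false) * s (G.ends g true))

theorem switchedSign_mul (G : SignedGraph V E) (s r : V → ℤˣ) (g : E) :
    G.switchedSign (s * r) g =
      G.switchedSign s g * (r (G.ends g false) * r (G.ends g true)) := by
  simp only [switchedSign, Pi.mul_apply, mul_assoc, mul_left_comm]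

theorem compatible_iff_switchedSign_eq_one (ht : ∀ i, t (G.ends g i) = ((s (G.ends g i) : ℤ) : ℚ)) :
    G.Compatible t g ↔ G.switchedSign s g = 1 := by
  rw [Compatible, switchedSign, ht, ht, ← Int.cast_mul, Int.cast_inj, ← Units.val_mul,
    Units.val_inj, mul_left_comm, ← mul_assoc, mul_assoc, mul_eq_one_iff_eq_inv,
    Int.units_inv_eq_self]

/-- After switching at `s`, all edges of `K ⊆ S` are positive, and `K` has the same connected
components as `S`. -/
structure PositivelySpans (G : SignedGraph V E) (s : V → ℤˣ) (K S : Finset E) : Prop where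
  subset : K ⊆ S
  switchedSign_eq_one : ∀ g ∈ K, G.switchedSign s g = 1
  reach : ∀ g ∈ S, G.Reach K (G.ends g false) (G.ends g true)

-- Switch all vertices in the component of one end of `e`.
theorem exists_switchedSign_eq_one_of_not_reach
    (he : ¬ G.Reach K (G.ends e false) (G.ends e true)) (s : V → ℤˣ) :
    ∃ s', G.switchedSign s' e = 1 ∧
      ∀ g, G.Reach K (G.ends g false) (G.ends g true) →
        G.switchedSign s' g = G.switchedSign s g := by
  classical
  let r : V → ℤˣ := fun v => if G.Reach K v (G.ends e false) then G.switchedSign s e else 1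
  refine ⟨s * r, ?_, fun g hg => ?_⟩
  · have hfalse : r (G.ends e false) = G.switchedSign s e := if_pos .refl
    have htrue : r (G.ends e true) = 1 := if_neg fun h => he (Reach.symm h)
    rw [switchedSign_mul, hfalse, htrue, mul_one, Int.units_mul_self]
  · have hr : r (G.ends g false) = r (G.ends g true) :=
      hg.apply_eq fun b hb => if_congr
        ⟨(reach_ends hb true false).trans, (reach_ends hb false true).trans⟩ rfl rfl
    rw [switchedSign_mul, hr, Int.units_mul_self, mul_one]

theorem exists_positivelySpans (G : SignedGraph V E) (S : Finset E) :
    ∃ s K, G.PositivelySpans s K S := by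
  classical
  induction S using Finset.induction with
  | empty => exact ⟨1, ∅, Subset.rfl, by simp, by simp⟩
  | insert e S _ ih =>
    obtain ⟨s, K, hKS, hpos, hreach⟩ := ih
    by_cases he : G.Reach K (G.ends e false) (G.ends e true)
    · exact ⟨s, K, hKS.trans (subset_insert _ _), hpos, (forall_mem_insert _ _ _).2 ⟨he, hreach⟩⟩
    · obtain ⟨s', he', hs'⟩ := exists_switchedSign_eq_one_of_not_reach he s
      refine ⟨s', insert e K, insert_subset_insert _ hKS, ?_, ?_⟩ <;> rw [forall_mem_insert]
      · exact ⟨he', fun g hg => (hs' g (reach_ends hg _ _)).trans (hpos g hg)⟩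
      · exact ⟨reach_ends (mem_insert_self _ _) _ _,
          fun g hg => (hreach g hg).mono (subset_insert _ _)⟩

open Classical in
/-- The switching function `s` cut off outside the component of `u` in the subgraph `K`, as a
rational potential. -/
noncomputable def componentPotential (G : SignedGraph V E) (s : V → ℤˣ) (K : Finset E) (u v : V) :
    ℚ :=
  if G.Reach K v u then ((s v : ℤ) : ℚ) else 0

theorem componentPotential_of_reach (h : G.Reach K v u) :
    G.componentPotential s K u v = ((s v : ℤ) : ℚ) :=
  if_pos h

theorem componentPotential_of_not_reach (h : ¬ G.Reach K v u) :
    G.componentPotential s K u v = 0 :=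
  if_neg h

theorem componentPotential_self_ne_zero : G.componentPotential s K u u ≠ 0 := by
  rw [componentPotential_of_reach .refl]
  exact Int.cast_ne_zero.2 (s u).ne_zero

theorem compatible_componentPotential_iff (hg : G.Reach K (G.ends g false) (G.ends g true)) :
    G.Compatible (G.componentPotential s K u) g ↔
      (G.Reach K (G.ends g false) u → G.switchedSign s g = 1) := by
  by_cases hu : G.Reach K (G.ends g false) u
  · have hends : ∀ i, G.Reach K (G.ends g i) u := Bool.forall_bool.2 ⟨hu, hg.symm.trans hu⟩
    simp only [hu, true_imp_iff]
    exact compatible_iff_switchedSign_eq_one fun i => componentPotential_of_reach (hends i)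
  · have hends : ∀ i, ¬ G.Reach K (G.ends g i) u :=
      Bool.forall_bool.2 ⟨hu, fun h => hu (hg.trans h)⟩
    simp only [hu, false_imp_iff, iff_true]
    exact .of_eq_zero fun i => componentPotential_of_not_reach (hends i)

theorem not_compatible_componentPotential_ends
    (he : ¬ G.Reach K (G.ends e false) (G.ends e true)) (i : Bool) :
    ¬ G.Compatible (G.componentPotential s K (G.ends e i)) e := by
  intro hcomp
  have hself := componentPotential_self_ne_zero (G := G) (s := s) (K := K) (u := G.ends e i)
  have habs := hcomp.abs_eq
  cases i
  · rw [componentPotential_of_not_reach fun h => he (Reach.symm h), abs_zero, abs_eq_zero] at habs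
    exact hself habs
  · rw [componentPotential_of_not_reach he, abs_zero, eq_comm, abs_eq_zero] at habs
    exact hself habs

variable [Fintype E] [DecidableEq E]

theorem PositivelySpans.exists_negative_edge (hK : G.PositivelySpans s K (univ.erase e))
    (hu : ¬ ∀ g, g ≠ e → G.Compatible (G.componentPotential s K u) g) :
    ∃ g, g ≠ e ∧ G.switchedSign s g = -1 ∧ G.Reach K (G.ends g false) u := by
  push Not at hu
  obtain ⟨g, hge, hg⟩ := hu
  rw [compatible_componentPotential_iff (hK.reach g (mem_erase.2 ⟨hge, mem_univ g⟩)),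
    Classical.not_imp] at hg
  exact ⟨g, hge, Int.units_ne_iff_eq_neg.1 hg.2, hg.1⟩

theorem Coloopless.exists_negative_edge (hG : G.Coloopless)
    (hK : G.PositivelySpans s K (univ.erase e))
    (hu : ¬ G.Compatible (G.componentPotential s K u) e) :
    ∃ g, g ≠ e ∧ G.switchedSign s g = -1 ∧ G.Reach K (G.ends g false) u :=
  hK.exists_negative_edge fun h => hu (hG _ e h)

variable [Fintype V] [DecidableEq V]

theorem IsCircuit.signOf_eq_prod_switchedSign (hS : G.IsCircuit S) (s : V → ℤˣ) :
    G.signOf S = ∏ g ∈ S, G.switchedSign s g := by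
  have hone : ∏ v, s v ^ G.valencyOn S v = 1 := prod_eq_one fun v _ => by
    obtain ⟨n, hn⟩ := hS.even_valencyOn v
    rw [hn, ← two_mul, pow_mul, Int.units_sq, one_pow]
  simp only [switchedSign]
  rw [prod_mul_distrib, prod_ends, hone, mul_one, signOf]

theorem Connected.balanced_of_forall_compatible (hG : G.Connected) (ht : ∀ g, G.Compatible t g)
    (hu : t u ≠ 0) : G.Balanced := by
  intro S hS
  by_contra hsign
  obtain ⟨g, hg⟩ := hS.1
  have hzero : t (G.ends g true) = 0 :=
    IsUnbalancedCircuit.eq_zero ⟨hS, Int.units_ne_iff_eq_neg.1 hsign⟩ (fun b _ => ht b)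
      (ends_mem_suppV hg true)
  exact hu (Reach.eq_zero_of_compatible (hG.2 _ u) (fun b _ => ht b) hzero)

end Switching

section NegativePair

variable {V E : Type} [Fintype V] [Fintype E] [DecidableEq V] [DecidableEq E]
  {G : SignedGraph V E} {s : V → ℤˣ} {A B P Q Z K : Finset E} {W X Y : Finset V}
  {e f : E} {x y z : V}

theorem SimplePath.isUnbalancedCircuit_insert
    (hP : G.SimplePath P W (G.ends e false) (G.ends e true))
    (hpos : ∀ g ∈ P, G.switchedSign s g = 1) (he : G.switchedSign s e = -1) :
    G.IsUnbalancedCircuit (insert e P) := by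
  have heP : e ∉ P := fun h => by simp [hpos e h] at he
  have hcircuit := hP.isCircuit_insert heP
  refine ⟨hcircuit, ?_⟩
  rw [hcircuit.signOf_eq_prod_switchedSign s, prod_insert heP, he, prod_eq_one hpos, mul_one]

-- The two links and `f` form an ear of the circuit `insert e Q`; rerouting the circuit through it
-- yields a circuit with exactly the two negative edges `e` and `f`.
theorem exists_isBalancedCircuit_of_disjoint_links
    (hQ : G.SimplePath Q W (G.ends e false) (G.ends e true))
    (hA : G.SimplePath A X (G.ends f false) x) (hB : G.SimplePath B Y (G.ends f true) y)
    (hx : x ∈ W) (hy : y ∈ W) (hXW : ∀ z ∈ X, z ∈ W → z = x) (hYW : ∀ z ∈ Y, z ∈ W → z = y)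
    (hXY : Disjoint X Y) (hpos : ∀ g ∈ Q ∪ (A ∪ B), G.switchedSign s g = 1)
    (he : G.switchedSign s e = -1) (hf : G.switchedSign s f = -1) (hef : e ≠ f) :
    ∃ T, G.IsBalancedCircuit T ∧ e ∈ T ∧ f ∈ T := by
  have hfB := hB.cons f false (disjoint_left.1 hXY hA.left_mem)
  have hJ := hA.reverse.append hfB fun z hzX hz =>
    (mem_insert.1 hz).elim id fun hzY => absurd hzY (disjoint_left.1 hXY hzX)
  obtain ⟨R, _, hR, hJR, hRQ⟩ := hQ.exists_detour hJ hx hy fun z hz hzW => by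
    rw [mem_union, mem_insert] at hz
    obtain hz | rfl | hz := hz
    · exact .inl (hXW z hz hzW)
    · exact .inl (hXW _ hA.left_mem hzW)
    · exact .inr (hYW z hz hzW)
  have hfR : f ∈ R := hJR (mem_union_right _ (mem_insert_self _ _))
  have hposR : ∀ g ∈ R, g ≠ f → G.switchedSign s g = 1 := fun g hg hgf => hpos g <| by
    simpa [hgf] using hRQ hg
  have heR : e ∉ R := fun h => by simp [hposR e h hef] at he
  have hcircuit := hR.isCircuit_insert heR
  refine ⟨insert e R, ⟨hcircuit, ?_⟩, mem_insert_self _ _, mem_insert_of_mem hfR⟩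
  rw [hcircuit.signOf_eq_prod_switchedSign s, prod_insert heR,
    prod_eq_single_of_mem f hfR hposR, he, hf, neg_mul_neg, one_mul]

theorem SimplePath.isSignedCircuit_of_link
    (hQ : G.SimplePath Q W (G.ends e false) (G.ends e true))
    (hP : G.SimplePath P X (G.ends f false) (G.ends f true)) (hZ : G.SimplePath Z Y y z)
    (hy : y ∈ W) (hz : z ∈ X) (hYW : ∀ w ∈ Y, w ∈ W → w = y) (hYX : ∀ w ∈ Y, w ∈ X → w = z)
    (hWX : ∀ w ∈ W, w ∈ X → w = y) (hposQ : ∀ g ∈ Q, G.switchedSign s g = 1)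
    (hposP : ∀ g ∈ P, G.switchedSign s g = 1) (he : G.switchedSign s e = -1)
    (hf : G.switchedSign s f = -1) (hef : e ≠ f) :
    G.IsSignedCircuit (insert e Q ∪ insert f P ∪ Z) := by
  have heP : e ∉ insert f P := fun h => by
    simp [hposP e ((mem_insert.1 h).resolve_left hef)] at he
  have hfQ : f ∉ Q := fun h => by simp [hposQ f h] at hf
  have hdisj : Disjoint (insert e Q) (insert f P) :=
    disjoint_insert_left.2 ⟨heP, disjoint_insert_right.2
      ⟨hfQ, hQ.disjoint_of_ends_mem (fun _ hg => hP.ends_mem hg) hWX⟩⟩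
  refine hZ.isSignedCircuit_union (hQ.isUnbalancedCircuit_insert hposQ he)
    (hP.isUnbalancedCircuit_insert hposP hf) hdisj ?_ ?_ ?_ <;>
    simp only [hQ.suppV_insert, hP.suppV_insert, eq_singleton_iff_unique_mem, mem_inter, and_imp]
  · exact ⟨⟨hZ.left_mem, hy⟩, hYW⟩
  · exact ⟨⟨hZ.right_mem, hz⟩, hYX⟩
  · intro w hw
    rw [hWX w (mem_inter.1 hw).1 (mem_inter.1 hw).2]
    exact hZ.left_mem

-- Up to the first vertex `z` of the first link on the second one, the links form with `f` an
-- unbalanced circuit, which the rest of the second link joins to the circuit `insert e Q`.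
theorem exists_isSignedCircuit_of_meeting_links
    (hQ : G.SimplePath Q W (G.ends e false) (G.ends e true))
    (hA : G.SimplePath A X (G.ends f false) x) (hB : G.SimplePath B Y (G.ends f true) y)
    (hy : y ∈ W) (hXW : ∀ z ∈ X, z ∈ W → z = x) (hYW : ∀ z ∈ Y, z ∈ W → z = y)
    (hXY : ¬ Disjoint X Y) (hpos : ∀ g ∈ Q ∪ (A ∪ B), G.switchedSign s g = 1)
    (he : G.switchedSign s e = -1) (hf : G.switchedSign s f = -1) (hef : e ≠ f) :
    ∃ T, G.IsSignedCircuit T ∧ e ∈ T ∧ f ∈ T := by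
  obtain ⟨z, hzY, A₁, A₂, X₁, X₂, hA₁, hA₂, rfl, rfl, hX₁₂, hX₁Y⟩ :=
    hA.exists_split_at_first_mem (not_disjoint_iff.1 hXY)
  obtain ⟨B₁, B₂, Y₁, Y₂, hB₁, hB₂, rfl, rfl, hY₁₂⟩ := hB.exists_split hzY
  have hP := hA₁.append hB₁.reverse fun w hw hw' => hX₁Y w hw (mem_union_left _ hw')
  have hposP : ∀ g ∈ A₁ ∪ B₁, G.switchedSign s g = 1 := fun g hg => hpos g <|
    mem_union_right _ (union_subset_union subset_union_left subset_union_left hg)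
  have hWP : ∀ w ∈ W, w ∈ X₁ ∪ Y₁ → w = y := by
    intro w hw hw'
    obtain hw' | hw' := mem_union.1 hw'
    · have hwx : w = x := hXW w (mem_union_left _ hw') hw
      have hwz : w = z := hX₁₂ w hw' (hwx ▸ hA₂.right_mem)
      exact hYW w (hwz ▸ hzY) hw
    · exact hYW w (mem_union_left _ hw') hw
  have hYP : ∀ w ∈ Y₂, w ∈ X₁ ∪ Y₁ → w = z := fun w hw hw' => (mem_union.1 hw').elim
    (fun h => hX₁Y w h (mem_union_right _ hw)) fun h => hY₁₂ w h hw
  refine ⟨_, hQ.isSignedCircuit_of_link hP hB₂.reverse hy (mem_union_left _ hA₁.right_mem)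
    (fun w hw => hYW w (mem_union_right _ hw)) hYP hWP
    (fun g hg => hpos g (mem_union_left _ hg)) hposP he hf hef, ?_, ?_⟩ <;> simp

theorem exists_isSignedCircuit_of_negative_pair (hpos : ∀ g ∈ K, G.switchedSign s g = 1)
    (he : G.switchedSign s e = -1) (hf : G.switchedSign s f = -1) (hef : e ≠ f)
    (hreache : G.Reach K (G.ends e false) (G.ends e true))
    (hreachf : G.Reach K (G.ends f false) (G.ends f true))
    (hreach : G.Reach K (G.ends f false) (G.ends e false)) :
    ∃ T, G.IsSignedCircuit T ∧ e ∈ T ∧ f ∈ T := by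
  obtain ⟨Q, W, hQK, hQ⟩ := hreache.exists_simplePath
  obtain ⟨A, X, hAK, x, hx, hA, hXW⟩ := hreach.exists_simplePath_to_first_mem hQ.left_mem
  obtain ⟨B, Y, hBK, y, hy, hB, hYW⟩ :=
    Reach.exists_simplePath_to_first_mem (hreachf.symm.trans hreach) hQ.left_mem
  have hpos' : ∀ g ∈ Q ∪ (A ∪ B), G.switchedSign s g = 1 := fun g hg =>
    hpos g (union_subset hQK (union_subset hAK hBK) hg)
  by_cases hXY : Disjoint X Y
  · obtain ⟨T, hT, hmem⟩ := exists_isBalancedCircuit_of_disjoint_links hQ hA hB hx hy hXW hYW hXY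
      hpos' he hf hef
    exact ⟨T, .inl hT, hmem⟩
  · exact exists_isSignedCircuit_of_meeting_links hQ hA hB hy hXW hYW hXY hpos' he hf hef

end NegativePair

section Main

variable {V E : Type} [Fintype V] [Fintype E] [DecidableEq V] [DecidableEq E]
  {G : SignedGraph V E} {s : V → ℤˣ} {K : Finset E} {e : E}

theorem Coloopless.exists_isSignedCircuit_of_reach (hG : G.Coloopless)
    (hK : G.PositivelySpans s K (univ.erase e))
    (he : G.Reach K (G.ends e false) (G.ends e true)) : ∃ T, G.IsSignedCircuit T ∧ e ∈ T := by
  by_cases hsign : G.switchedSign s e = 1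
  · obtain ⟨P, W, hPK, hP⟩ := he.exists_simplePath
    have hcircuit := hP.isCircuit_insert fun h => notMem_erase e univ (hK.subset (hPK h))
    refine ⟨_, .inl ⟨hcircuit, ?_⟩, mem_insert_self e P⟩
    rw [hcircuit.signOf_eq_prod_switchedSign s]
    exact prod_eq_one ((forall_mem_insert _ _ _).2
      ⟨hsign, fun g hg => hK.switchedSign_eq_one g (hPK hg)⟩)
  · obtain ⟨g, hge, hg, hreach⟩ := hG.exists_negative_edge (u := G.ends e false) hK fun h =>
      hsign ((compatible_componentPotential_iff he).1 h .refl)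
    obtain ⟨T, hT, heT, -⟩ := exists_isSignedCircuit_of_negative_pair hK.switchedSign_eq_one
      (Int.units_ne_iff_eq_neg.1 hsign) hg hge.symm he
      (hK.reach g (mem_erase.2 ⟨hge, mem_univ g⟩)) hreach
    exact ⟨T, hT, heT⟩

-- Both components joined by `e` contain a negative edge; a signed circuit through these two edges
-- has to cross `e`.
theorem Coloopless.exists_isSignedCircuit_of_not_reach (hG : G.Coloopless)
    (hK : G.PositivelySpans s K (univ.erase e))
    (he : ¬ G.Reach K (G.ends e false) (G.ends e true)) : ∃ T, G.IsSignedCircuit T ∧ e ∈ T := by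
  have hspan : ∀ g, g ≠ e → G.Reach K (G.ends g false) (G.ends g true) := fun g hge =>
    hK.reach g (mem_erase.2 ⟨hge, mem_univ g⟩)
  obtain ⟨g, hge, hg, hgreach⟩ :=
    hG.exists_negative_edge hK (not_compatible_componentPotential_ends he false)
  obtain ⟨h, hhe, hh, hhreach⟩ :=
    hG.exists_negative_edge hK (not_compatible_componentPotential_ends he true)
  have hne : G.Reach K (G.ends h false) (G.ends g false) → False := fun hr =>
    he (hgreach.symm.trans (hr.symm.trans hhreach))
  obtain ⟨s', hs'e, hs'⟩ := exists_switchedSign_eq_one_of_not_reach he s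
  have hpos : ∀ b ∈ insert e K, G.switchedSign s' b = 1 := (forall_mem_insert _ _ _).2
    ⟨hs'e, fun b hb => (hs' b (reach_ends hb _ _)).trans (hK.switchedSign_eq_one b hb)⟩
  have hsub : K ⊆ insert e K := subset_insert e K
  have hhg : G.Reach (insert e K) (G.ends h false) (G.ends g false) :=
    (hhreach.mono hsub).trans ((reach_ends (mem_insert_self _ _) true false).trans
      (hgreach.symm.mono hsub))
  obtain ⟨T, hT, hgT, hhT⟩ := exists_isSignedCircuit_of_negative_pair hpos
    ((hs' g (hspan g hge)).trans hg) ((hs' h (hspan h hhe)).trans hh)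
    (fun heq => hne (heq ▸ .refl)) ((hspan g hge).mono hsub) ((hspan h hhe).mono hsub) hhg
  refine ⟨T, hT, by_contra fun heT => hne ?_⟩
  exact Reach.of_forall_edge (fun b hb => hspan b fun heq => heT (heq ▸ hb))
    (hT.connOn _ (ends_mem_suppV hhT false) _ (ends_mem_suppV hgT false))

theorem coloopless_iff_forall_mem_isSignedCircuit :
    G.Coloopless ↔ ∀ e, ∃ T, G.IsSignedCircuit T ∧ e ∈ T := by
  refine ⟨fun hG e => ?_, coloopless_of_forall_mem_isSignedCircuit⟩
  obtain ⟨s, K, hK⟩ := G.exists_positivelySpans (univ.erase e)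
  by_cases he : G.Reach K (G.ends e false) (G.ends e true)
  · exact hG.exists_isSignedCircuit_of_reach hK he
  · exact hG.exists_isSignedCircuit_of_not_reach hK he

theorem Coloopless.noBalancedComponentAvoiding (hG : G.Coloopless) (hconn : G.Connected)
    (hunbal : ¬ G.Balanced) (f : E) : G.NoBalancedComponentAvoiding f := by
  intro u
  obtain ⟨s, K, hK⟩ := G.exists_positivelySpans (univ.erase f)
  obtain ⟨g, hgf, hg, hgu⟩ := hK.exists_negative_edge (u := u) fun hcomp => hunbal <|
    hconn.balanced_of_forall_compatible
      (fun g => (eq_or_ne g f).elim (fun h => h ▸ hG _ f hcomp) (hcomp g))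
      componentPotential_self_ne_zero
  obtain ⟨P, W, hPK, hP⟩ := (hK.reach g (mem_erase.2 ⟨hgf, mem_univ g⟩)).exists_simplePath
  obtain ⟨hcircuit, hsign⟩ :=
    hP.isUnbalancedCircuit_insert (fun b hb => hK.switchedSign_eq_one b (hPK hb)) hg
  have hf : f ∉ insert g P := fun h => (mem_insert.1 h).elim hgf.symm fun hfP =>
    notMem_erase f univ (hK.subset (hPK hfP))
  refine ⟨insert g P, hcircuit, hsign, hf, fun w hw => ?_⟩
  rw [hP.suppV_insert] at hw
  exact Reach.mono hK.subset (((hP.reach hw).symm.mono hPK).trans hgu)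

theorem coloopless_iff_forall_noBalancedComponentAvoiding (hconn : G.Connected)
    (hunbal : ¬ G.Balanced) : G.Coloopless ↔ ∀ f, G.NoBalancedComponentAvoiding f :=
  ⟨fun hG => hG.noBalancedComponentAvoiding hconn hunbal,
    coloopless_of_forall_noBalancedComponentAvoiding⟩

end Main

end SignedGraph

open SignedGraph Finset in
/-- For a connected unbalanced signed graph `G`, the following
are equivalent: (a) `G` admits a nowhere-zero integer flow; (b) the edges of
`G` can be covered by signed circuits; (c) for each edge `f`, the graph
`G - f` contains no balanced connected component. -/
theorem stmt6 {V E : Type} [Fintype V] [Fintype E] [DecidableEq V]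
    [DecidableEq E] (G : SignedGraph V E) (hconn : G.Connected)
    (hunbal : ¬ G.Balanced) :
    (G.FlowAdmissible ↔ ∀ e : E, ∃ T : Finset E, G.IsSignedCircuit T ∧ e ∈ T) ∧
    (G.FlowAdmissible ↔ ∀ f : E, G.NoBalancedComponentAvoiding f) :=
  ⟨flowAdmissible_iff_coloopless.trans coloopless_iff_forall_mem_isSignedCircuit,
    flowAdmissible_iff_coloopless.trans
      (coloopless_iff_forall_noBalancedComponentAvoiding hconn hunbal)⟩
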